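/- Let G be a finite group acting on a finite nonempty set X, let K be the Burnside kernel, let k be the number of G-orbits on X, and define π(x) = 1/(k · #O_x) where O_x is the orbit of x. Then π is a probability distribution on X, i.e. Σ_{x ∈ X} π(x) = 1, and K is reversible with respect to π: for all x, y ∈ X, π(x)·K(x,y) = π(y)·K(y,x). In particular π is a stationary distribution: Σ_{x ∈ X} π(x)·K(x,y) = π(y) for all y ∈ X. -/

import Mathlib

/-!
By orbit–stabilizer, `#O_x · #G_x = #G`, so `π(x) K(x,y) = (k · #G)⁻¹ Σ_{g ∈ G_x ∩ G_y} 1/#X_g`,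
which is symmetric in `x` and `y`; this is reversibility (`burnsidePi_mul_burnsideK`).
Each orbit contributes `Σ_{x ∈ O} 1/#O = 1` to `k · Σ π`, so `π` has total mass `1`
(`sum_burnsidePi`).  Exchanging the sums over `y ∈ X` and `g ∈ G_x` shows that the rows of `K`
sum to `1` (`sum_burnsideK`), and reversibility together with this gives stationarity.
-/

/-- The Burnside kernel: `K(x,y) = (1/#G_x) · Σ_{g ∈ G_x ∩ G_y} 1/#X_g`, where `G_x`
is the stabilizer of `x` and `X_g` the fixed-point set of `g`. -/
noncomputable def burnsideK (G X : Type*) [Group G] [Fintype G] [Fintype X]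
    [MulAction G X] (x y : X) : ℝ :=
  (Nat.card (MulAction.stabilizer G x) : ℝ)⁻¹ *
    ∑ᶠ g ∈ {g : G | g • x = x ∧ g • y = y}, (Nat.card {z : X // g • z = z} : ℝ)⁻¹

/-- `π(x) = 1/(k · #O_x)` where `k` is the number of `G`-orbits on `X` and `O_x` is
the orbit of `x`. -/
noncomputable def burnsidePi (G X : Type*) [Group G] [Fintype G] [Fintype X]
    [MulAction G X] (x : X) : ℝ :=
  ((Nat.card (Quotient (MulAction.orbitRel G X)) : ℝ) *
    (Nat.card (MulAction.orbit G x) : ℝ))⁻¹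

open Classical in
lemma burnsideK_eq_sum_ite (G X : Type*) [Group G] [Fintype G] [Fintype X]
    [MulAction G X] (x y : X) :
    burnsideK G X x y = (Nat.card (MulAction.stabilizer G x) : ℝ)⁻¹ *
      ∑ g : G, if g • x = x ∧ g • y = y then (Nat.card {z : X // g • z = z} : ℝ)⁻¹ else 0 := by
  unfold burnsideK
  rw [← Finset.sum_filter, finsum_mem_eq_finite_toFinset_sum _ (Set.toFinite _)]
  congr 2
  ext g
  simp

open Classical in
/-- Orbit–stabilizer turns `π(x) K(x,y)` into an expression symmetric in `x` and `y`. -/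
lemma burnsidePi_mul_burnsideK (G X : Type*) [Group G] [Fintype G] [Fintype X]
    [MulAction G X] (x y : X) :
    burnsidePi G X x * burnsideK G X x y =
      ((Nat.card (Quotient (MulAction.orbitRel G X)) : ℝ) * (Nat.card G : ℝ))⁻¹ *
      ∑ g : G, if g • x = x ∧ g • y = y then (Nat.card {z : X // g • z = z} : ℝ)⁻¹ else 0 := by
  have h : Nat.card (MulAction.orbit G x) * Nat.card (MulAction.stabilizer G x) = Nat.card G := by
    rw [← Nat.card_prod]
    exact Nat.card_congr (MulAction.orbitProdStabilizerEquivGroup G x)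
  rw [burnsideK_eq_sum_ite, burnsidePi, ← h, ← mul_assoc, ← mul_inv]
  push_cast
  rw [mul_assoc (Nat.card (Quotient (MulAction.orbitRel G X)) : ℝ)]

lemma sum_burnsideK (G X : Type*) [Group G] [Fintype G] [Fintype X]
    [MulAction G X] (x : X) : ∑ y : X, burnsideK G X x y = 1 := by
  classical
  simp_rw [burnsideK_eq_sum_ite]
  rw [← Finset.mul_sum, Finset.sum_comm]
  -- For `g ∈ G_x` the inner sum is `#X_g · (1/#X_g) = 1`, as `X_g` contains `x`.
  have h : ∀ g : G, (∑ y : X, if g • x = x ∧ g • y = y then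
      (Nat.card {z : X // g • z = z} : ℝ)⁻¹ else 0) = if g • x = x then 1 else 0 := by
    intro g
    by_cases hg : g • x = x
    · have : Nonempty {z : X // g • z = z} := ⟨⟨x, hg⟩⟩
      have h0 : (Nat.card {z : X // g • z = z} : ℝ) ≠ 0 := by
        exact_mod_cast Nat.card_pos.ne'
      simp only [hg, true_and, if_true]
      rw [← Finset.sum_filter, Finset.sum_const, nsmul_eq_mul, ← Fintype.card_subtype,
        ← Nat.card_eq_fintype_card, mul_inv_cancel₀ h0]
    · simp [hg]
  have hs : (Nat.card (MulAction.stabilizer G x) : ℝ) ≠ 0 := by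
    exact_mod_cast Nat.card_pos.ne'
  have hc : Nat.card (MulAction.stabilizer G x) = Nat.card {g : G // g • x = x} := rfl
  simp_rw [h]
  rw [Finset.sum_boole, ← Fintype.card_subtype, ← Nat.card_eq_fintype_card, ← hc,
    inv_mul_cancel₀ hs]

lemma sum_burnsidePi (G X : Type*) [Group G] [Fintype G] [Fintype X]
    [Nonempty X] [MulAction G X] : ∑ x : X, burnsidePi G X x = 1 := by
  classical
  have : Nonempty (Quotient (MulAction.orbitRel G X)) :=
    ‹Nonempty X›.map (Quotient.mk (MulAction.orbitRel G X))
  have hk : (Nat.card (Quotient (MulAction.orbitRel G X)) : ℝ) ≠ 0 := by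
    exact_mod_cast Nat.card_pos.ne'
  have hfib : ∀ q : Quotient (MulAction.orbitRel G X),
      ∑ x : X with (Quotient.mk (MulAction.orbitRel G X) x) = q,
        (Nat.card (MulAction.orbit G x) : ℝ)⁻¹ = 1 := by
    intro q
    induction q using Quotient.inductionOn with | _ a =>
    have hmem : ∀ x : X, Quotient.mk (MulAction.orbitRel G X) x =
        Quotient.mk (MulAction.orbitRel G X) a ↔ x ∈ MulAction.orbit G a := fun x => by
      rw [Quotient.eq]
      exact MulAction.orbitRel_apply
    have h0 : (Nat.card (MulAction.orbit G a) : ℝ) ≠ 0 := by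
      have : Nonempty (MulAction.orbit G a) := ⟨⟨a, MulAction.mem_orbit_self a⟩⟩
      exact_mod_cast Nat.card_pos.ne'
    simp_rw [hmem]
    rw [Finset.sum_congr rfl (g := fun _ => (Nat.card (MulAction.orbit G a) : ℝ)⁻¹)]
    · rw [Finset.sum_const, nsmul_eq_mul, ← Fintype.card_subtype, ← Nat.card_eq_fintype_card]
      exact mul_inv_cancel₀ h0
    · intro x hx
      rw [MulAction.orbit_eq_iff.mpr (Finset.mem_filter.mp hx).2]
  simp_rw [burnsidePi, mul_inv]
  rw [← Finset.mul_sum,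
    ← Finset.sum_fiberwise Finset.univ (Quotient.mk (MulAction.orbitRel G X))]
  simp_rw [hfib]
  rw [Finset.sum_const, Finset.card_univ, ← Nat.card_eq_fintype_card, nsmul_eq_mul, mul_one,
    inv_mul_cancel₀ hk]

/-- `π` is a probability distribution, the Burnside kernel is reversible with respect
to `π`, and in particular `π` is stationary for it. -/
theorem burnsideK_reversible (G X : Type*) [Group G] [Fintype G] [Fintype X]
    [Nonempty X] [MulAction G X] :
    (∑ x : X, burnsidePi G X x = 1) ∧
    (∀ x y : X, burnsidePi G X x * burnsideK G X x y =
      burnsidePi G X y * burnsideK G X y x) ∧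
    (∀ y : X, ∑ x : X, burnsidePi G X x * burnsideK G X x y = burnsidePi G X y) := by
  have hrev : ∀ x y : X, burnsidePi G X x * burnsideK G X x y =
      burnsidePi G X y * burnsideK G X y x := by
    classical
    intro x y
    simp only [burnsidePi_mul_burnsideK, and_comm]
  refine ⟨sum_burnsidePi G X, hrev, fun y => ?_⟩
  simp_rw [fun x => hrev x y]
  rw [← Finset.mul_sum, sum_burnsideK, mul_one]
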